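/- The chromatic quasisymmetric function of the path P_n = ([n], {{i,i+1} : 1 ≤ i ≤ n-1}) satisfies X_{P_n}(x;q) = Σ_{α ⊨ n} q^{ℓ(α)-1} [α_1]_q [α_2 - 1]_q ··· [α_m - 1]_q · e_{sort(α)}, summing over all compositions α = (α_1,...,α_m) of n. In particular X_{P_n}(x;q) is e-positive. -/

import Mathlib

noncomputable def qint (m : ℕ) : Polynomial ℤ := ∑ i ∈ Finset.range m, Polynomial.X ^ i

/-- The number of ascents of a colouring. -/
noncomputable def ascNum {n : ℕ} (G : SimpleGraph (Fin n)) {N : ℕ} (κ : Fin n → Fin N) : ℕ :=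
  Nat.card {p : Fin n × Fin n // p.1 < p.2 ∧ G.Adj p.1 p.2 ∧ κ p.1 < κ p.2}

/-- The chromatic quasisymmetric function `X_G(x;q)` in the variables `x_1, …, x_N`. -/
noncomputable def cqf {n : ℕ} (G : SimpleGraph (Fin n)) (N : ℕ) :
    MvPolynomial (Fin N) (Polynomial ℤ) :=
  ∑ᶠ (κ : Fin n → Fin N) (_ : ∀ i j, G.Adj i j → κ i ≠ κ j),
    MvPolynomial.C (Polynomial.X ^ ascNum G κ) * ∏ i, MvPolynomial.X (κ i)

/-- `e_{sort(α)}` for a list of parts `α` (sorting is immaterial in the product). -/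
noncomputable def esymmProd (N : ℕ) (parts : List ℕ) :
    MvPolynomial (Fin N) (Polynomial ℤ) :=
  (parts.map (MvPolynomial.esymm (Fin N) (Polynomial ℤ))).prod

/-!
Summing over the colour of the first vertex, the generating functions `W_a(z)` of the proper words
starting with `a`, weighted by `q ^ asc`, satisfy
`W_a = x_a z (1 + ∑_{b < a} W_b + q ∑_{b > a} W_b)`. Put `W = ∑ W_a`. Eliminating the colours one
at a time telescopes this system to `(1 + W) E(qz) = (1 + q W) E(z)`, where
`E(z) = ∏ (1 + x_a z) = ∑ e_k z ^ k`. Since `1 - q ^ k = (1 - q) [k]_q`, dividing by `1 - q` gives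
`W = (∑ [k]_q e_k z ^ k) / (1 - ∑ q [k - 1]_q e_k z ^ k)`, and the geometric series expands the
quotient as a sum over compositions.
-/

section Composition

open Finset PowerSeries

theorem sum_composition_succ_blocks {M : Type*} [AddCommMonoid M] (f : List ℕ → M) (n : ℕ) :
    ∑ α : Composition (n + 1), f α.blocks =
      ∑ p ∈ antidiagonal n, ∑ β : Composition p.2, f ((p.1 + 1) :: β.blocks) := by
  rw [sum_sigma']
  symm
  refine sum_bij (fun s hs => ⟨(s.1.1 + 1) :: s.2.blocks, ?_, ?_⟩) ?_ ?_ ?_ (fun _ _ => rfl)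
  · intro i hi
    rcases List.mem_cons.1 hi with rfl | hi
    · exact Nat.succ_pos _
    · exact s.2.blocks_pos hi
  · have hs : s.1.1 + s.1.2 = n := HasAntidiagonal.mem_antidiagonal.1 (mem_sigma.1 hs).1
    rw [List.sum_cons, s.2.blocks_sum]
    omega
  · exact fun _ _ => mem_univ _
  · rintro ⟨⟨a, b⟩, β⟩ _ ⟨⟨a', b'⟩, β'⟩ _ h
    simp only [Composition.mk.injEq, List.cons.injEq, add_left_inj] at h
    obtain ⟨rfl, h⟩ := h
    obtain rfl : b = b' := β.blocks_sum.symm.trans ((congrArg List.sum h).trans β'.blocks_sum)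
    rw [Composition.ext h]
  · rintro ⟨_ | ⟨a, t⟩, hpos, hsum⟩ -
    · simp at hsum
    · have ha : 0 < a := hpos List.mem_cons_self
      rw [List.sum_cons] at hsum
      refine ⟨⟨(a - 1, t.sum), ⟨t, fun hi => hpos (List.mem_cons_of_mem _ hi), rfl⟩⟩, ?_, ?_⟩
      · simp only [mem_sigma, HasAntidiagonal.mem_antidiagonal, mem_univ, and_true]
        omega
      · exact Composition.ext (congrArg (· :: t) (Nat.sub_add_cancel ha))

/-- The generating series of compositions in which each part `k` has weight `g k`. When `g 0 = 0`
it is the geometric series `1 / (1 - ∑ g k z ^ k)`. -/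
noncomputable def compositionSeries {R : Type*} [Semiring R] (g : ℕ → R) : R⟦X⟧ :=
  mk fun n => ∑ β : Composition n, (β.blocks.map g).prod

theorem coeff_succ_mk_mul_compositionSeries {R : Type*} [Semiring R] {h : ℕ → R} (h0 : h 0 = 0)
    (g : ℕ → R) (n : ℕ) :
    coeff (n + 1) (mk h * compositionSeries g) =
      ∑ α : Composition (n + 1), h α.blocks.headI * (α.blocks.tail.map g).prod := by
  rw [sum_composition_succ_blocks (fun l => h l.headI * (l.tail.map g).prod), coeff_mul,
    Nat.sum_antidiagonal_succ]
  simp [h0, compositionSeries, mul_sum]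

theorem compositionSeries_eq_one_add {R : Type*} [Semiring R] {g : ℕ → R} (g0 : g 0 = 0) :
    compositionSeries g = 1 + mk g * compositionSeries g := by
  ext n
  cases n with
  | zero =>
    have hblocks (β : Composition 0) : β.blocks = [] := β.blocks_eq_nil.2 rfl
    simp [g0, compositionSeries, hblocks, composition_card]
  | succ n =>
    rw [map_add, coeff_succ_mk_mul_compositionSeries g0, coeff_one, if_neg n.succ_ne_zero,
      zero_add, compositionSeries, coeff_mk, sum_composition_succ_blocks (fun l => (l.map g).prod),
      sum_composition_succ_blocks (fun l => g l.headI * (l.tail.map g).prod)]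
    simp

theorem eq_mul_compositionSeries_of_mul_one_sub_eq {R : Type*} [CommRing R] {g : ℕ → R}
    (g0 : g 0 = 0) {F H : R⟦X⟧} (hF : F * (1 - mk g) = H) : F = H * compositionSeries g := by
  linear_combination compositionSeries g * hF - F * compositionSeries_eq_one_add g0

end Composition

section Word

open PowerSeries

variable {σ R : Type*} [CommSemiring R] (w : σ → σ → R) (x : σ → R)

/-- The weight of a nonempty word `κ`: its letters are weighted by `x` and its pairs of adjacent
letters by `w`. -/
def wordWeight {n : ℕ} (κ : Fin (n + 1) → σ) : R :=
  (∏ i : Fin n, w (κ i.castSucc) (κ i.succ)) * ∏ i, x (κ i)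

theorem wordWeight_cons {n : ℕ} (a : σ) (κ : Fin (n + 1) → σ) :
    wordWeight w x (Fin.cons a κ : Fin (n + 2) → σ) = x a * (w a (κ 0) * wordWeight w x κ) := by
  simp only [wordWeight]
  rw [Fin.prod_univ_succ, Fin.prod_univ_succ (n := n + 1)]
  simp only [Fin.castSucc_zero, Fin.cons_zero, Fin.cons_succ, ← Fin.succ_castSucc]
  ring

variable [Fintype σ]

theorem sum_word_succ {M : Type*} [AddCommMonoid M] {n : ℕ} (f : (Fin (n + 1) → σ) → M) :
    ∑ κ, f κ = ∑ a, ∑ κ : Fin n → σ, f (Fin.cons a κ) := by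
  rw [← Fintype.sum_prod_type', ← (Fin.consEquiv fun _ => σ).sum_comp]
  rfl

/-- The total weight of the words of length `n + 1` with first letter `a`. -/
def wordSum (n : ℕ) (a : σ) : R := ∑ κ : Fin n → σ, wordWeight w x (Fin.cons a κ : Fin (n + 1) → σ)

theorem wordSum_zero (a : σ) : wordSum w x 0 a = x a := by
  simp [wordSum, wordWeight]

theorem wordSum_succ (n : ℕ) (a : σ) :
    wordSum w x (n + 1) a = x a * ∑ b, w a b * wordSum w x n b := by
  simp only [wordSum, sum_word_succ (n := n), wordWeight_cons, Fin.cons_zero, Finset.mul_sum]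

/-- The generating series, by length, of the nonempty words with first letter `a`. -/
noncomputable def wordSeries (a : σ) : R⟦X⟧ := X * mk fun n => wordSum w x n a

theorem coeff_succ_sum_wordSeries (n : ℕ) :
    coeff (n + 1) (∑ a, wordSeries w x a) = ∑ κ : Fin (n + 1) → σ, wordWeight w x κ := by
  simp [wordSeries, coeff_succ_X_mul, sum_word_succ, wordSum]

theorem wordSeries_eq_mul_one_add (a : σ) :
    wordSeries w x a = C (x a) * X * (1 + ∑ b, C (w a b) * wordSeries w x b) := by
  have htail : (mk fun n => wordSum w x n a) =
      C (x a) * (1 + ∑ b, C (w a b) * wordSeries w x b) := by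
    ext n
    cases n with
    | zero => simp [wordSum_zero, wordSeries]
    | succ n => simp [wordSum_succ, wordSeries, coeff_succ_X_mul, coeff_one]
  rw [wordSeries, htail]
  ring

end Word

/-- The weight of a pair of adjacent letters: with it and all letter weights equal to `1`, a word
has weight `q ^ asc` if its adjacent letters are distinct and `0` otherwise. -/
def ascWeight {σ R : Type*} [LinearOrder σ] [CommSemiring R] (q : R) (a b : σ) : R :=
  if a < b then q else if b < a then 1 else 0

theorem map_ascWeight {σ R S : Type*} [LinearOrder σ] [CommSemiring R] [CommSemiring S]
    (φ : R →+* S) (q : R) (a b : σ) :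
    φ (ascWeight q a b) = ascWeight (φ q) a b := by
  simp only [ascWeight, apply_ite φ, map_one, map_zero]

section Telescoping

open Finset

variable {σ R : Type*} [LinearOrder σ] [CommRing R]

theorem add_sum_mul_prod_eq_mul_prod (d : R) (f g V : σ → R) (s : Finset σ)
    (hV : ∀ a ∈ s, V a * g a = (d + ∑ b ∈ s with b < a, V b) * (f a - g a)) :
    (d + ∑ a ∈ s, V a) * ∏ a ∈ s, g a = d * ∏ a ∈ s, f a := by
  induction s using Finset.induction_on_max with
  | empty => simp
  | insert m s hm ih =>
    have hms : m ∉ s := fun h => (hm m h).false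
    have hs : (d + ∑ a ∈ s, V a) * ∏ a ∈ s, g a = d * ∏ a ∈ s, f a := ih fun a ha => by
      simpa [filter_insert, (hm a ha).not_gt] using hV a (mem_insert_of_mem ha)
    have hmax : V m * g m = (d + ∑ b ∈ s, V b) * (f m - g m) := by
      simpa [filter_insert, filter_true_of_mem hm] using hV m (mem_insert_self m s)
    rw [sum_insert hms, prod_insert hms, prod_insert hms]
    linear_combination (∏ a ∈ s, g a) * hmax + f m * hs

variable [Fintype σ]

theorem sum_ascWeight_mul_add (q : R) (W : σ → R) (a : σ) :
    ∑ b, ascWeight q a b * W b + q * W a = q * ∑ b, W b + (1 - q) * ∑ b with b < a, W b := by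
  have hdiag : q * W a = ∑ b, if b = a then q * W b else 0 := by simp
  rw [hdiag, mul_sum, mul_sum, sum_filter, ← sum_add_distrib, ← sum_add_distrib]
  refine sum_congr rfl fun b _ => ?_
  rcases lt_trichotomy a b with hab | rfl | hab
  · simp [ascWeight, hab, hab.ne', hab.not_gt]
  · simp [ascWeight]
  · simp only [ascWeight, hab, hab.ne, hab.not_gt, if_true, if_false]
    ring

theorem one_add_sum_mul_prod_of_ascWeight {q : R} {y W : σ → R}
    (hW : ∀ a, W a = y a * (1 + ∑ b, ascWeight q a b * W b)) :
    (1 + ∑ a, W a) * ∏ a, (1 + q * y a) = (1 + q * ∑ a, W a) * ∏ a, (1 + y a) := by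
  have htel := add_sum_mul_prod_eq_mul_prod (1 + q * ∑ a, W a) (fun a => 1 + y a)
    (fun a => 1 + q * y a) (fun a => (1 - q) * W a) univ fun a _ => by
      rw [← mul_sum]
      linear_combination (1 - q) * (hW a + y a * sum_ascWeight_mul_add q W a)
  rw [← mul_sum] at htel
  linear_combination htel

end Telescoping

section Rescale

open Finset PowerSeries

theorem rescale_C_mul_X {R : Type*} [CommSemiring R] (q r : R) :
    rescale q (C r * X) = C q * (C r * X) := by
  ext n
  simp only [coeff_rescale, coeff_C_mul, coeff_X]
  split_ifs with hn <;> simp [hn]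

theorem isLeftRegular_C {R : Type*} [Semiring R] {r : R} (hr : IsLeftRegular r) :
    IsLeftRegular (C r : R⟦X⟧) := by
  intro F G hFG
  ext n
  exact hr (by simpa using congrArg (coeff n) hFG)

theorem prod_one_add_C_mul_X {σ R : Type*} [Fintype σ] [CommSemiring R] (x : σ → R) :
    ∏ a, (1 + C (x a) * X) = mk (univ.val.map x).esymm := by
  ext k
  simp only [prod_one_add, prod_mul_distrib, prod_const, ← map_prod, map_sum, coeff_C_mul_X_pow,
    coeff_mk, esymm_map_val, powersetCard_eq_filter, sum_filter, eq_comm (a := k)]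

variable {R : Type*} [CommRing R]

theorem sub_rescale (q : R) (E : R⟦X⟧) :
    E - rescale q E = C (1 - q) * mk fun k => (∑ i ∈ range k, q ^ i) * coeff k E := by
  ext k
  rw [map_sub, coeff_rescale, coeff_C_mul, coeff_mk]
  linear_combination -coeff k E * mul_neg_geom_sum q k

theorem rescale_sub_C_mul (q : R) {E : R⟦X⟧} (hE : constantCoeff E = 1) :
    rescale q E - C q * E =
      C (1 - q) * (1 - mk fun k => q * (∑ i ∈ range (k - 1), q ^ i) * coeff k E) := by
  ext k
  rw [map_sub, coeff_rescale, coeff_C_mul, coeff_C_mul, map_sub, coeff_mk, coeff_one]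
  cases k with
  | zero => simp [hE]
  | succ k =>
    rw [if_neg k.succ_ne_zero, Nat.add_sub_cancel]
    linear_combination q * coeff (k + 1) E * mul_neg_geom_sum q k

end Rescale

section AscentWord

open Finset PowerSeries

variable {σ R : Type*} [LinearOrder σ] [Fintype σ] [CommRing R]

theorem one_add_sum_wordSeries_mul_rescale (q : R) (x : σ → R) :
    (1 + ∑ a, wordSeries (ascWeight q) x a) * rescale q (mk (univ.val.map x).esymm) =
      (1 + C q * ∑ a, wordSeries (ascWeight q) x a) * mk (univ.val.map x).esymm := by
  have hprod : ∏ a, (1 + C q * (C (x a) * X)) = rescale q (∏ a, (1 + C (x a) * X)) := by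
    simp only [map_prod, map_add, map_one, rescale_C_mul_X]
  rw [← prod_one_add_C_mul_X, ← hprod]
  refine one_add_sum_mul_prod_of_ascWeight fun a => ?_
  simp only [← map_ascWeight]
  exact wordSeries_eq_mul_one_add _ x a

theorem sum_wordSeries_ascWeight_mul {q : R} (hq : IsLeftRegular (1 - q)) (x : σ → R) :
    (∑ a, wordSeries (ascWeight q) x a) *
        (1 - mk fun k => q * (∑ i ∈ range (k - 1), q ^ i) * (univ.val.map x).esymm k) =
      mk fun k => (∑ i ∈ range k, q ^ i) * (univ.val.map x).esymm k := by
  have hnum := sub_rescale q (mk (univ.val.map x).esymm)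
  have hden := rescale_sub_C_mul q (E := mk (univ.val.map x).esymm) (by simp [Multiset.esymm])
  simp only [coeff_mk] at hnum hden
  refine isLeftRegular_C hq ?_
  linear_combination one_add_sum_wordSeries_mul_rescale q x + hnum -
    (∑ a, wordSeries (ascWeight q) x a) * hden

theorem sum_wordWeight_ascWeight {q : R} (hq : IsLeftRegular (1 - q)) (x : σ → R) (n : ℕ) :
    ∑ κ : Fin (n + 1) → σ, wordWeight (ascWeight q) x κ =
      ∑ α : Composition (n + 1),
        (∑ i ∈ range α.blocks.headI, q ^ i) * (univ.val.map x).esymm α.blocks.headI *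
          (α.blocks.tail.map fun k =>
            q * (∑ i ∈ range (k - 1), q ^ i) * (univ.val.map x).esymm k).prod := by
  rw [← coeff_succ_sum_wordSeries,
    eq_mul_compositionSeries_of_mul_one_sub_eq (by simp) (sum_wordSeries_ascWeight_mul hq x),
    coeff_succ_mk_mul_compositionSeries (by simp)]

end AscentWord

section PathGraph

open Finset SimpleGraph

theorem covBy_iff_exists_castSucc_succ {n : ℕ} {i j : Fin (n + 1)} :
    i ⋖ j ↔ ∃ k : Fin n, k.castSucc = i ∧ k.succ = j := by
  rw [Fin.covBy_iff, Nat.covBy_iff_add_one_eq]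
  constructor
  · intro hij
    exact ⟨⟨i, by omega⟩, rfl, Fin.ext hij⟩
  · rintro ⟨k, rfl, rfl⟩
    rfl

theorem pathGraph_forall_adj_iff {n : ℕ} {r : Fin (n + 1) → Fin (n + 1) → Prop}
    (hr : ∀ i j, r i j → r j i) :
    (∀ i j, (pathGraph (n + 1)).Adj i j → r i j) ↔ ∀ k : Fin n, r k.castSucc k.succ := by
  simp only [pathGraph, hasse_adj, covBy_iff_exists_castSucc_succ]
  constructor
  · exact fun h k => h _ _ (.inl ⟨k, rfl, rfl⟩)
  · rintro h _ _ (⟨k, rfl, rfl⟩ | ⟨k, rfl, rfl⟩)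
    exacts [h k, hr _ _ (h k)]

theorem lt_and_hasse_adj_iff_covBy {α : Type*} [Preorder α] {a b : α} :
    a < b ∧ (hasse α).Adj a b ↔ a ⋖ b := by
  rw [hasse_adj]
  exact ⟨fun ⟨hab, hadj⟩ => hadj.resolve_right fun hba => hab.not_gt hba.lt,
    fun hab => ⟨hab.lt, .inl hab⟩⟩

theorem ascNum_pathGraph {n N : ℕ} (κ : Fin (n + 1) → Fin N) :
    ascNum (pathGraph (n + 1)) κ = #{k : Fin n | κ k.castSucc < κ k.succ} := by
  have hinj : Function.Injective fun k : Fin n => (k.castSucc, k.succ) := fun k l hkl =>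
    Fin.succ_injective n (congrArg Prod.snd hkl)
  rw [ascNum, ← card_map ⟨_, hinj⟩]
  refine Nat.subtype_card _ fun ⟨i, j⟩ => ?_
  rw [← and_assoc, pathGraph, lt_and_hasse_adj_iff_covBy, covBy_iff_exists_castSucc_succ]
  simp only [mem_map, mem_filter, mem_univ, true_and, Function.Embedding.coeFn_mk, Prod.mk.injEq]
  constructor
  · rintro ⟨k, hk, rfl, rfl⟩
    exact ⟨⟨k, rfl, rfl⟩, hk⟩
  · rintro ⟨⟨k, rfl, rfl⟩, hk⟩
    exact ⟨k, hk, rfl, rfl⟩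

theorem wordWeight_ascWeight {R : Type*} [CommSemiring R] {n N : ℕ} (q : R) (x : Fin N → R)
    (κ : Fin (n + 1) → Fin N) [Decidable (∀ i j, (pathGraph (n + 1)).Adj i j → κ i ≠ κ j)] :
    wordWeight (ascWeight q) x κ =
      if ∀ i j, (pathGraph (n + 1)).Adj i j → κ i ≠ κ j
        then q ^ ascNum (pathGraph (n + 1)) κ * ∏ i, x (κ i) else 0 := by
  rw [wordWeight, ← ite_zero_mul, ascNum_pathGraph]
  congr 1
  simp only [pathGraph_forall_adj_iff (r := fun i j => κ i ≠ κ j) fun _ _ => Ne.symm]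
  split_ifs with h
  · have hedge (k : Fin n) : ascWeight q (κ k.castSucc) (κ k.succ) =
        if κ k.castSucc < κ k.succ then q else 1 := by
      simp only [ascWeight]
      split_ifs with h₁ h₂
      exacts [rfl, rfl, absurd (le_antisymm (not_lt.1 h₂) (not_lt.1 h₁)) (h k)]
    rw [prod_congr rfl fun k _ => hedge k, ← prod_filter, prod_const]
  · push Not at h
    obtain ⟨k, hk⟩ := h
    exact prod_eq_zero (mem_univ k) (by simp [ascWeight, hk])

theorem cqf_pathGraph_succ (n N : ℕ) :
    cqf (pathGraph (n + 1)) N =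
      ∑ κ : Fin (n + 1) → Fin N,
        wordWeight (ascWeight (MvPolynomial.C Polynomial.X)) MvPolynomial.X κ := by
  classical
  rw [cqf, finsum_eq_sum_of_fintype]
  refine sum_congr rfl fun κ _ => ?_
  rw [finsum_eq_if, wordWeight_ascWeight, map_pow]

end PathGraph

section Coefficients

theorem C_qint {σ : Type*} (m : ℕ) :
    (MvPolynomial.C (qint m) : MvPolynomial σ (Polynomial ℤ)) =
      ∑ i ∈ Finset.range m, MvPolynomial.C Polynomial.X ^ i := by
  simp only [qint, map_sum, map_pow]

theorem C_mul_esymmProd_cons (N a : ℕ) (t : List ℕ) :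
    MvPolynomial.C (Polynomial.X ^ t.length * qint a * (t.map fun k => qint (k - 1)).prod) *
        esymmProd N (a :: t) =
      MvPolynomial.C (qint a) * MvPolynomial.esymm (Fin N) (Polynomial ℤ) a *
        (t.map fun k => MvPolynomial.C Polynomial.X * MvPolynomial.C (qint (k - 1)) *
          MvPolynomial.esymm (Fin N) (Polynomial ℤ) k).prod := by
  simp only [esymmProd, List.map_cons, List.prod_cons, List.prod_map_mul, map_mul, map_pow,
    List.map_const', List.prod_replicate, map_list_prod, List.map_map, Function.comp_def]
  ring

theorem isLeftRegular_one_sub_C_X {σ R : Type*} [CommRing R] [IsDomain R] :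
    IsLeftRegular (1 - MvPolynomial.C Polynomial.X : MvPolynomial σ (Polynomial R)) := by
  have hX : (1 - Polynomial.X : Polynomial R) ≠ 0 :=
    sub_ne_zero.2 (Polynomial.X_ne_C 1).symm
  refine (IsRegular.of_ne_zero ?_).left
  rwa [← map_one MvPolynomial.C, ← map_sub, Ne, MvPolynomial.C_eq_zero]

end Coefficients

/-- the chromatic quasisymmetric function of the path `P_n` is
`X_{P_n}(x;q) = Σ_{α ⊨ n} q^{ℓ(α)-1} [α_1]_q [α_2-1]_q ⋯ [α_m-1]_q e_{sort(α)}`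
(in every number `N` of variables). -/
theorem cqf_pathGraph (n : ℕ) (hn : 0 < n) (N : ℕ) :
    cqf (SimpleGraph.pathGraph n) N =
      ∑ α : Composition n,
        MvPolynomial.C (Polynomial.X ^ (α.length - 1) * qint α.blocks.headI *
            (α.blocks.tail.map (fun b => qint (b - 1))).prod) *
          esymmProd N α.blocks := by
  obtain ⟨n, rfl⟩ := Nat.exists_eq_add_one.2 hn
  rw [cqf_pathGraph_succ, sum_wordWeight_ascWeight isLeftRegular_one_sub_C_X]
  refine Finset.sum_congr rfl fun α _ => ?_
  simp only [← C_qint, ← MvPolynomial.esymm_eq_multiset_esymm]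
  obtain ⟨a, t, hblocks⟩ : ∃ a t, α.blocks = a :: t :=
    List.exists_cons_of_ne_nil (mt α.blocks_eq_nil.1 n.succ_ne_zero)
  rw [← α.blocks_length, hblocks]
  exact (C_mul_esymmProd_cons N a t).symm
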